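/- The maximum deterministic query complexity over Boolean functions on the weight-2 slice of {0,1}^n is n − Θ(log n): for all sufficiently large n, there exists a function f on the weight-2 slice with D(f) ≥ n − 2 log₂ n, while every function f on the weight-2 slice satisfies D(f) ≤ n − (log₂ n)/4. -/

import Mathlib

/-- A deterministic decision tree querying variables indexed by `ι`. -/
inductive DTree (ι : Type) : Type where
  | leaf : Bool → DTree ι
  | node : ι → DTree ι → DTree ι → DTree ι

namespace DTree

/-- Evaluation of a decision tree on an input `x : ι → Bool`. -/
def eval {ι : Type} : DTree ι → (ι → Bool) → Bool
  | .leaf b, _ => b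
  | .node i t0 t1, x => if x i then eval t1 x else eval t0 x

/-- The number of queries made by a decision tree on an input. -/
def cost {ι : Type} : DTree ι → (ι → Bool) → ℕ
  | .leaf _, _ => 0
  | .node i t0 t1, x => 1 + (if x i then cost t1 x else cost t0 x)

end DTree

/-- `T` computes `f` on the domain `S`. -/
def Computes {ι : Type} (T : DTree ι) (S : Set (ι → Bool)) (f : (ι → Bool) → Bool) : Prop :=
  ∀ x ∈ S, T.eval x = f x

/-- Deterministic query complexity of `f` on the domain `S`: the least `d` such that some
decision tree computes `f` on `S` making at most `d` queries on every input in `S`. -/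
noncomputable def Dquery {ι : Type} (S : Set (ι → Bool)) (f : (ι → Bool) → Bool) : ℕ :=
  sInf {d | ∃ T : DTree ι, Computes T S f ∧ ∀ x ∈ S, T.cost x ≤ d}

/-- Hamming weight of `x : ι → Bool`. -/
def hamWeight {ι : Type} [Fintype ι] (x : ι → Bool) : ℕ :=
  (Finset.univ.filter fun i => x i = true).card

/-- The `k`-th cubeSlice: inputs of Hamming weight exactly `k`. -/
def cubeSlice (ι : Type) [Fintype ι] (k : ℕ) : Set (ι → Bool) :=
  {x | hamWeight x = k}

/-!
A Boolean function on a slice is a 2-colouring of the `k`-subsets of the variables, and its query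
complexity is governed by monochromatic sets of variables.

If a tree makes at most `d` queries, answering every query by `0` leaves `n - d` unqueried
variables whose `k`-subsets all reach the same leaf, hence a monochromatic set of size `n - d`.
By Erdős's union bound, some colouring of the pairs has no monochromatic set of size
`⌈2 log₂ n⌉`.

Conversely, Ramsey's theorem gives a monochromatic set `H` with more than `(log₂ n) / 2` elements.
Query all variables outside `H`. The value of the function is then known unless exactly one of
them is `1`. In that case the other `1` lies in `H`, the value depends only on its position, and
querying the positions in `H` carrying the rarer of the two values decides it, so at least
`|H| / 2` queries are saved.
-/

open Finset

section Ramsey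

variable {α : Type*} {G : SimpleGraph α} {s : Finset α}

theorem eq_empty_of_cliqueFreeOn_one (h : G.CliqueFreeOn s 1) : s = ∅ := by
  refine eq_empty_of_forall_notMem fun v hv => h (t := {v}) (by simpa using hv) ?_
  simp [SimpleGraph.isNClique_iff]

theorem cliqueFreeOn_filter_adj {n : ℕ} {v : α} [DecidablePred (G.Adj v)]
    (h : G.CliqueFreeOn s (n + 1)) (hv : v ∈ s) :
    G.CliqueFreeOn ({w ∈ s | G.Adj v w} : Finset α) n :=
  (h.of_succ _ hv).subset _ fun w hw => by simpa using hw

theorem card_lt_choose_of_cliqueFreeOn {a b : ℕ} (ha : G.CliqueFreeOn s (a + 1))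
    (hb : Gᶜ.CliqueFreeOn s (b + 1)) : #s < (a + b).choose a := by
  classical
  induction a generalizing b s with
  | zero => simp [eq_empty_of_cliqueFreeOn_one ha]
  | succ a iha =>
  induction b generalizing s with
  | zero => simp [eq_empty_of_cliqueFreeOn_one hb]
  | succ b ihb =>
  obtain rfl | ⟨v, hv⟩ := s.eq_empty_or_nonempty
  · exact Nat.choose_pos (by omega)
  have hN : #{w ∈ s | G.Adj v w} < (a + (b + 1)).choose a :=
    iha (cliqueFreeOn_filter_adj ha hv) (hb.subset _ (coe_subset.2 (filter_subset _ _)))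
  have hNc : #{w ∈ s | Gᶜ.Adj v w} < (a + 1 + b).choose (a + 1) :=
    ihb (ha.subset _ (coe_subset.2 (filter_subset _ _))) (cliqueFreeOn_filter_adj hb hv)
  have hcover : s ⊆ insert v ({w ∈ s | G.Adj v w} ∪ {w ∈ s | Gᶜ.Adj v w}) := by
    intro w hw
    simp only [mem_insert, mem_union, mem_filter, SimpleGraph.compl_adj]
    grind
  have hpascal : (a + 1 + (b + 1)).choose (a + 1)
      = (a + (b + 1)).choose a + (a + 1 + b).choose (a + 1) := by
    rw [show a + 1 + (b + 1) = a + (b + 1) + 1 by omega, Nat.choose_succ_succ,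
      show a + (b + 1) = a + 1 + b by omega]
  have hcard : #s ≤ #{w ∈ s | G.Adj v w} + #{w ∈ s | Gᶜ.Adj v w} + 1 :=
    (card_le_card hcover).trans <| (card_insert_le _ _).trans <|
      Nat.add_le_add_right (card_union_le _ _) 1
  omega

theorem exists_isNClique_or_compl_of_four_pow_le [Fintype α] (G : SimpleGraph α) {m : ℕ}
    (hm : 4 ^ m ≤ Fintype.card α) :
    ∃ U : Finset α, G.IsNClique (m + 1) U ∨ Gᶜ.IsNClique (m + 1) U := by
  by_contra! hfree
  have hlt : #(univ : Finset α) < (m + m).choose m :=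
    card_lt_choose_of_cliqueFreeOn (fun U _ => (hfree U).1) (fun U _ => (hfree U).2)
  have hle : (m + m).choose m ≤ 4 ^ m := by
    simpa [← two_mul, pow_mul] using Nat.choose_le_two_pow (m + m) m
  rw [card_univ] at hlt
  omega

end Ramsey

section UnionBound

variable {α β : Type*} [Fintype β]

theorem card_filter_forall_mem_eq [Fintype α] [DecidableEq α] [DecidableEq β]
    (s : Finset α) (b : β) :
    #{F : α → β | ∀ a ∈ s, F a = b} = Fintype.card β ^ (Fintype.card α - #s) := by
  have hpi : ({F : α → β | ∀ a ∈ s, F a = b} : Finset (α → β))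
      = Fintype.piFinset fun a => if a ∈ s then {b} else univ := by
    ext F
    simp only [mem_filter_univ, Fintype.mem_piFinset]
    refine forall_congr' fun a => ?_
    by_cases ha : a ∈ s <;> simp [ha]
  simp only [hpi, Fintype.card_piFinset, apply_ite card, card_singleton, card_univ, prod_ite,
    prod_const, one_pow, one_mul]
  rw [← compl_filter, filter_univ_mem, card_compl]

theorem exists_coloring_forall_not_const [Finite α] [Nonempty β] {𝒜 : Finset (Finset α)} {m : ℕ}
    (hm : ∀ A ∈ 𝒜, #A = m) (hcard : #𝒜 * Fintype.card β < Fintype.card β ^ m) :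
    ∃ F : α → β, ∀ A ∈ 𝒜, ∀ b, ¬ ∀ a ∈ A, F a = b := by
  classical
  have := Fintype.ofFinite α
  by_contra! hconst
  obtain rfl | ⟨A₀, hA₀⟩ := 𝒜.eq_empty_or_nonempty
  · simp at hconst
  have hmα : m ≤ Fintype.card α := hm A₀ hA₀ ▸ card_le_univ A₀
  have hcover : univ ⊆ (𝒜 ×ˢ (univ : Finset β)).biUnion
      fun p => {F : α → β | ∀ a ∈ p.1, F a = p.2} := fun F _ => by
    obtain ⟨A, hA, b, hb⟩ := hconst F
    exact mem_biUnion.2 ⟨(A, b), by simpa using hA, by simpa using hb⟩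
  refine lt_irrefl (Fintype.card (α → β)) ?_
  calc Fintype.card (α → β)
      ≤ #(𝒜 ×ˢ (univ : Finset β)) * Fintype.card β ^ (Fintype.card α - m) :=
        (card_le_card hcover).trans <| card_biUnion_le_card_mul _ _ _ fun p hp => by
          have hcardA := card_filter_forall_mem_eq p.1 p.2
          rw [hm _ (mem_product.1 hp).1] at hcardA
          convert hcardA.le
    _ < Fintype.card β ^ m * Fintype.card β ^ (Fintype.card α - m) := by
        rw [card_product, card_univ]
        exact Nat.mul_lt_mul_of_pos_right hcard (pow_pos Fintype.card_pos _)
    _ = Fintype.card (α → β) := by rw [← pow_add, Nat.add_sub_cancel' hmα, Fintype.card_fun]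

theorem two_pow_add_two_lt_factorial_sq {k : ℕ} (hk : 3 ≤ k) : 2 ^ (k + 2) < k.factorial ^ 2 := by
  induction k, hk using Nat.le_induction with
  | base => decide
  | succ k hk ih =>
    calc 2 ^ (k + 1 + 2) = 2 * 2 ^ (k + 2) := by ring
      _ < 2 * k.factorial ^ 2 := by omega
      _ ≤ (k + 1) ^ 2 * k.factorial ^ 2 := Nat.mul_le_mul_right _ (by nlinarith)
      _ = (k + 1).factorial ^ 2 := by rw [Nat.factorial_succ, mul_pow]

theorem choose_mul_two_lt_two_pow_choose_two {n k : ℕ} (hk : 3 ≤ k) (hn : n ^ 2 ≤ 2 ^ k) :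
    n.choose k * 2 < 2 ^ k.choose 2 := by
  have hchoose : k.factorial * n.choose k ≤ n ^ k := by
    rw [← Nat.descFactorial_eq_factorial_mul_choose]
    exact Nat.descFactorial_le_pow n k
  have hexp : k * k = k.choose 2 * 2 + k := by
    rw [Nat.choose_two_right, Nat.div_mul_cancel (Nat.even_mul_pred_self k).two_dvd,
      ← Nat.mul_succ, Nat.succ_eq_add_one, Nat.sub_add_cancel (by omega)]
  refine lt_of_pow_lt_pow_left₀ 2 (by positivity)
    (lt_of_mul_lt_mul_right (a := k.factorial ^ 2) ?_ (by positivity))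
  calc (n.choose k * 2) ^ 2 * k.factorial ^ 2
      = 2 ^ 2 * (k.factorial * n.choose k) ^ 2 := by ring
    _ ≤ 2 ^ 2 * (n ^ k) ^ 2 := by gcongr
    _ = 2 ^ 2 * (n ^ 2) ^ k := by rw [pow_right_comm]
    _ ≤ 2 ^ 2 * (2 ^ k) ^ k := by gcongr
    _ = (2 ^ k.choose 2) ^ 2 * 2 ^ (k + 2) := by rw [← pow_mul, hexp]; ring
    _ < (2 ^ k.choose 2) ^ 2 * k.factorial ^ 2 := by
        gcongr
        exact two_pow_add_two_lt_factorial_sq hk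

end UnionBound

section DecisionTrees

variable {ι : Type} {S : Set (ι → Bool)} {f : (ι → Bool) → Bool} {d e : ℕ}

/-- Some decision tree computes `f` on `S` with at most `d` queries on every input in `S`;
`Dquery S f` is the least such `d`. -/
def ComputableWithin (S : Set (ι → Bool)) (f : (ι → Bool) → Bool) (d : ℕ) : Prop :=
  ∃ T : DTree ι, Computes T S f ∧ ∀ x ∈ S, T.cost x ≤ d

theorem ComputableWithin.dquery_le (h : ComputableWithin S f d) : Dquery S f ≤ d :=
  Nat.sInf_le h

theorem ComputableWithin.mono (h : ComputableWithin S f d) (hde : d ≤ e) :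
    ComputableWithin S f e :=
  let ⟨T, hT, hcost⟩ := h
  ⟨T, hT, fun x hx => (hcost x hx).trans hde⟩

theorem computableWithin_zero_of_const {b : Bool} (h : ∀ x ∈ S, f x = b) :
    ComputableWithin S f 0 :=
  ⟨.leaf b, fun x hx => (h x hx).symm, fun _ _ => le_rfl⟩

theorem ComputableWithin.query (i : ι)
    (h : ∀ b, ComputableWithin {x ∈ S | x i = b} f d) : ComputableWithin S f (1 + d) := by
  obtain ⟨T₀, hT₀, hcost₀⟩ := h false
  obtain ⟨T₁, hT₁, hcost₁⟩ := h true
  refine ⟨.node i T₀ T₁, fun x hx => ?_, fun x hx => Nat.add_le_add_left ?_ 1⟩ <;>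
    cases hxi : x i
  · simpa [DTree.eval, hxi] using hT₀ x ⟨hx, hxi⟩
  · simpa [DTree.eval, hxi] using hT₁ x ⟨hx, hxi⟩
  · simpa using hcost₀ x ⟨hx, hxi⟩
  · simpa using hcost₁ x ⟨hx, hxi⟩

theorem ComputableWithin.query_finset (L : Finset ι)
    (h : ∀ y : ι → Bool, ComputableWithin {x ∈ S | ∀ i ∈ L, x i = y i} f d) :
    ComputableWithin S f (#L + d) := by
  classical
  induction L using Finset.induction_on generalizing S with
  | empty => simpa using h fun _ => false
  | insert i L hi ih =>
    rw [card_insert_of_notMem hi, add_comm #L 1, add_assoc]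
    refine .query i fun b => ih fun y => ?_
    convert h (Function.update y i b) using 1
    ext x
    have hL : (∀ j ∈ L, x j = Function.update y i b j) ↔ ∀ j ∈ L, x j = y j :=
      forall₂_congr fun j hj => by rw [Function.update_of_ne (ne_of_mem_of_not_mem hj hi)]
    simp [hL, and_assoc]

theorem computableWithin_card_of_determined (L : Finset ι)
    (h : ∀ x ∈ S, ∀ x' ∈ S, (∀ i ∈ L, x i = x' i) → f x = f x') :
    ComputableWithin S f #L := by
  refine .query_finset (d := 0) L fun y => ?_
  by_cases hy : ∃ z ∈ S, ∀ i ∈ L, z i = y i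
  · obtain ⟨z, hz, hzy⟩ := hy
    exact computableWithin_zero_of_const fun x hx =>
      h x hx.1 z hz fun i hi => (hx.2 i hi).trans (hzy i hi).symm
  · exact computableWithin_zero_of_const (b := false) fun x hx => absurd ⟨x, hx⟩ hy

theorem computableWithin_dquery [Finite ι] (S : Set (ι → Bool)) (f : (ι → Bool) → Bool) :
    ComputableWithin S f (Dquery S f) := by
  have := Fintype.ofFinite ι
  have huniv : ComputableWithin S f #(univ : Finset ι) :=
    computableWithin_card_of_determined univ fun x _ x' _ hxx' =>
      congrArg f (funext fun i => hxx' i (mem_univ i))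
  exact Nat.sInf_mem (s := {d | ComputableWithin S f d}) ⟨_, huniv⟩

theorem computableWithin_card_div_two_of_forall_true {H : Finset ι} {c : ι → Bool}
    (hit : ∀ x ∈ S, ∃ j ∈ H, x j = true)
    (hc : ∀ x ∈ S, ∀ j ∈ H, x j = true → f x = c j) :
    ComputableWithin S f (#H / 2) := by
  obtain ⟨b, -, hb⟩ : ∃ b ∈ (univ : Finset Bool), #{j ∈ H | c j = b} < #H / 2 + 1 :=
    exists_card_fiber_lt_of_card_lt_mul (by rw [card_univ, Fintype.card_bool]; omega)
  have hfb : ∀ x ∈ S, f x = b ↔ ∃ j ∈ ({j ∈ H | c j = b} : Finset ι), x j = true := by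
    refine fun x hx => ⟨fun hfx => ?_, fun ⟨j, hj, hxj⟩ => ?_⟩
    · obtain ⟨j, hj, hxj⟩ := hit x hx
      exact ⟨j, mem_filter.2 ⟨hj, (hc x hx j hj hxj).symm.trans hfx⟩, hxj⟩
    · rw [mem_filter] at hj
      exact (hc x hx j hj.1 hxj).trans hj.2
  refine (computableWithin_card_of_determined _ fun x hx x' hx' hxx' => ?_).mono
    (Nat.lt_succ_iff.1 hb)
  have hiff : f x = b ↔ f x' = b := by
    rw [hfb x hx, hfb x' hx']
    exact exists_congr fun j => and_congr_right fun hj => by rw [hxx' j hj]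
  revert hiff
  cases f x <;> cases f x' <;> cases b <;> simp

end DecisionTrees

section Slices

variable {ι : Type} [DecidableEq ι]

/-- The characteristic vector of `s`, identifying sets of variables with inputs. -/
def charVec (s : Finset ι) : ι → Bool := fun i => decide (i ∈ s)

theorem charVec_eq_true {s : Finset ι} {i : ι} : charVec s i = true ↔ i ∈ s := by
  simp [charVec]

theorem charVec_eq_false {s : Finset ι} {i : ι} : charVec s i = false ↔ i ∉ s := by
  simp [charVec]

theorem charVec_injective : Function.Injective (charVec : Finset ι → ι → Bool) := fun s t h => by
  ext i
  rw [← charVec_eq_true, h, charVec_eq_true]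

theorem mem_cubeSlice_iff [Fintype ι] {k : ℕ} {x : ι → Bool} :
    x ∈ cubeSlice ι k ↔ ∃ s : Finset ι, #s = k ∧ charVec s = x := by
  refine ⟨fun hx => ⟨_, hx, ?_⟩, ?_⟩
  · ext i
    simp [charVec]
  · rintro ⟨s, rfl, rfl⟩
    simp [cubeSlice, hamWeight, charVec]

/-- Reading `f` as a 2-colouring of the `k`-subsets of the variables, every `k`-subset of `U` has
colour `b`. -/
def IsMonochromatic (f : (ι → Bool) → Bool) (k : ℕ) (U : Finset ι) (b : Bool) : Prop :=
  ∀ s ⊆ U, #s = k → f (charVec s) = b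

end Slices

section LowerBound

variable {ι : Type} [DecidableEq ι] {k m : ℕ}

theorem DTree.exists_isMonochromatic_eval (hkm : k ≤ m) (T : DTree ι) {d : ℕ} {R : Finset ι}
    (hR : d + m ≤ #R) (hcost : ∀ s ⊆ R, #s = k → T.cost (charVec s) ≤ d) :
    ∃ U ⊆ R, #U = m ∧ ∃ b, IsMonochromatic T.eval k U b := by
  induction T generalizing d R with
  | leaf b =>
    obtain ⟨U, hUR, hU⟩ := exists_subset_card_eq (show m ≤ #R by omega)
    exact ⟨U, hUR, hU, b, fun _ _ _ => rfl⟩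
  | node i T₀ T₁ ih₀ _ =>
    have hzero : ∀ s ⊆ R.erase i, charVec s i = false := fun s hs =>
      charVec_eq_false.2 fun hi => notMem_erase i R (hs hi)
    have hd : 1 ≤ d := by
      obtain ⟨s, hsR, hs⟩ := exists_subset_card_eq (show k ≤ #R by omega)
      exact (Nat.le_add_right 1 _).trans (hcost s hsR hs)
    obtain ⟨U, hUR, hU, b, hb⟩ := ih₀ (d := d - 1) (R := R.erase i)
      (by have := pred_card_le_card_erase (s := R) (a := i); omega)
      (fun s hs hsk => by
        have := hcost s (hs.trans (erase_subset _ _)) hsk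
        simp only [DTree.cost, hzero s hs, Bool.false_eq_true, if_false] at this
        omega)
    refine ⟨U, hUR.trans (erase_subset _ _), hU, b, fun s hs hsk => ?_⟩
    simpa [DTree.eval, hzero s (hs.trans hUR)] using hb s hs hsk

variable [Fintype ι]

theorem card_lt_dquery_add_of_forall_not_isMonochromatic (hkm : k ≤ m) {f : (ι → Bool) → Bool}
    (hf : ∀ U : Finset ι, #U = m → ∀ b, ¬ IsMonochromatic f k U b) :
    Fintype.card ι < Dquery (cubeSlice ι k) f + m := by
  by_contra! hle
  obtain ⟨T, hT, hcost⟩ := computableWithin_dquery (cubeSlice ι k) f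
  obtain ⟨U, -, hU, b, hb⟩ := T.exists_isMonochromatic_eval hkm (R := univ) hle
    fun s _ hs => hcost _ (mem_cubeSlice_iff.2 ⟨s, hs, rfl⟩)
  exact hf U hU b fun s hsU hs => (hT _ (mem_cubeSlice_iff.2 ⟨s, hs, rfl⟩)).symm.trans (hb s hsU hs)

theorem exists_forall_not_isMonochromatic
    (h : (Fintype.card ι).choose m * 2 < 2 ^ m.choose k) :
    ∃ f : (ι → Bool) → Bool, ∀ U : Finset ι, #U = m → ∀ b, ¬ IsMonochromatic f k U b := by
  obtain ⟨f, hf⟩ := exists_coloring_forall_not_const (β := Bool) (m := m.choose k)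
    (𝒜 := (powersetCard m univ).image fun U : Finset ι => (powersetCard k U).image charVec)
    (by simp +contextual [card_image_of_injective _ charVec_injective])
    ((Nat.mul_le_mul_right _ card_image_le).trans_lt (by simpa using h))
  refine ⟨f, fun U hU b hb => hf _ (mem_image_of_mem _ (mem_powersetCard_univ.2 hU)) b ?_⟩
  refine forall_mem_image.2 fun s hs => ?_
  obtain ⟨hsU, hsk⟩ := mem_powersetCard.1 hs
  exact hb s hsU hsk

end LowerBound

section UpperBound

variable {ι : Type} [Fintype ι] [DecidableEq ι] {f : (ι → Bool) → Bool}

theorem IsMonochromatic.computableWithin_two {H : Finset ι} {b : Bool}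
    (hH : IsMonochromatic f 2 H b) :
    ComputableWithin (cubeSlice ι 2) f (#Hᶜ + #H / 2) := by
  refine .query_finset Hᶜ fun y => ?_
  set P : Finset ι := {i ∈ Hᶜ | y i = true} with hP
  have hsP : ∀ s : Finset ι, (∀ i ∈ Hᶜ, charVec s i = y i) → s \ H = P := by
    intro s hs
    ext i
    by_cases hi : i ∈ H
    · simp [hP, hi]
    · simp [hP, hi, ← hs i (mem_compl.2 hi), charVec_eq_true]
  obtain hP0 | hP1 | hP2 : #P = 0 ∨ #P = 1 ∨ 2 ≤ #P := by omega
  · refine (computableWithin_zero_of_const (b := b) ?_).mono (Nat.zero_le _)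
    rintro x ⟨hx, hxy⟩
    obtain ⟨s, hs, rfl⟩ := mem_cubeSlice_iff.1 hx
    exact hH s (sdiff_eq_empty_iff_subset.1 ((hsP s hxy).trans (card_eq_zero.1 hP0))) hs
  · obtain ⟨i, hi⟩ := card_eq_one.1 hP1
    refine computableWithin_card_div_two_of_forall_true (H := H)
      (c := fun j => f (charVec {i, j})) ?_ ?_ <;>
      rintro x ⟨hx, hxy⟩ <;> obtain ⟨s, hs, rfl⟩ := mem_cubeSlice_iff.1 hx
    · have hcard := card_sdiff_add_card_inter s H
      rw [hsP s hxy, hP1, hs] at hcard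
      obtain ⟨j, hj⟩ := card_pos.1 (show 0 < #(s ∩ H) by omega)
      exact ⟨j, mem_of_mem_inter_right hj, charVec_eq_true.2 (mem_of_mem_inter_left hj)⟩
    · intro j hjH hj
      have hiP : i ∈ s \ H := by rw [hsP s hxy, hi]; exact mem_singleton_self i
      have hne : i ≠ j := fun hij => (mem_sdiff.1 hiP).2 (hij ▸ hjH)
      have hpair : {i, j} = s := eq_of_subset_of_card_le
        (insert_subset (mem_sdiff.1 hiP).1 (singleton_subset_iff.2 (charVec_eq_true.1 hj)))
        (by rw [hs, card_pair hne])
      rw [hpair]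
  · refine (computableWithin_zero_of_const (b := f (charVec P)) ?_).mono (Nat.zero_le _)
    rintro x ⟨hx, hxy⟩
    obtain ⟨s, hs, rfl⟩ := mem_cubeSlice_iff.1 hx
    have hPs : P = s :=
      eq_of_subset_of_card_le (hsP s hxy ▸ sdiff_subset) (hs.le.trans hP2)
    rw [hPs]

/-- The graph on the variables whose edges are the pairs on which `f` is `true`. -/
def pairGraph (f : (ι → Bool) → Bool) : SimpleGraph ι where
  Adj i j := i ≠ j ∧ f (charVec {i, j}) = true
  symm := ⟨fun i j h => ⟨h.1.symm, pair_comm i j ▸ h.2⟩⟩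
  loopless := ⟨fun _ h => h.1 rfl⟩

theorem exists_isMonochromatic_two_of_four_pow_le (f : (ι → Bool) → Bool) {m : ℕ}
    (hm : 4 ^ m ≤ Fintype.card ι) :
    ∃ U : Finset ι, #U = m + 1 ∧ ∃ b, IsMonochromatic f 2 U b := by
  obtain ⟨U, hU | hU⟩ := exists_isNClique_or_compl_of_four_pow_le (pairGraph f) hm
  · refine ⟨U, hU.card_eq, true, fun s hsU hs => ?_⟩
    obtain ⟨i, j, hij, rfl⟩ := card_eq_two.1 hs
    exact (hU.isClique (hsU (by simp)) (hsU (by simp)) hij).2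
  · refine ⟨U, hU.card_eq, false, fun s hsU hs => ?_⟩
    obtain ⟨i, j, hij, rfl⟩ := card_eq_two.1 hs
    have hadj : ¬ (pairGraph f).Adj i j := (hU.isClique (hsU (by simp)) (hsU (by simp)) hij).2
    exact Bool.eq_false_of_not_eq_true fun h => hadj ⟨hij, h⟩

end UpperBound

section Asymptotics

variable {ι : Type} [Fintype ι]

theorem exists_card_sub_le_dquery_cubeSlice_two (hι : 3 ≤ Fintype.card ι) :
    ∃ f : (ι → Bool) → Bool,
      (Fintype.card ι : ℝ) - 2 * Real.logb 2 (Fintype.card ι) ≤ Dquery (cubeSlice ι 2) f := by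
  classical
  set n := Fintype.card ι
  set m := Nat.clog 2 (n ^ 2)
  have hn : n ^ 2 ≤ 2 ^ m := Nat.le_pow_clog one_lt_two _
  have hm : 3 ≤ m := (Nat.lt_clog_iff_pow_lt one_lt_two).2 (by nlinarith)
  obtain ⟨f, hf⟩ := exists_forall_not_isMonochromatic (choose_mul_two_lt_two_pow_choose_two hm hn)
  refine ⟨f, ?_⟩
  have hD : (n + 1 : ℝ) ≤ Dquery (cubeSlice ι 2) f + m := by
    exact_mod_cast card_lt_dquery_add_of_forall_not_isMonochromatic (by omega) hf
  have hmlog : (m : ℝ) < 2 * Real.logb 2 n + 1 := by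
    have hlog : Real.logb 2 ((n ^ 2 : ℕ) : ℝ) = 2 * Real.logb 2 n := by
      rw [Nat.cast_pow, Real.logb_pow, Nat.cast_two]
    have hceil : ⌈2 * Real.logb 2 n⌉₊ = m := by
      rw [← hlog]
      exact Real.natCeil_logb_natCast 2 (n ^ 2)
    rw [← hceil]
    refine Nat.ceil_lt_add_one (mul_nonneg zero_le_two (Real.logb_nonneg one_lt_two ?_))
    exact_mod_cast (by omega : 1 ≤ n)
  linarith

theorem dquery_cubeSlice_two_le [Nonempty ι] (f : (ι → Bool) → Bool) :
    (Dquery (cubeSlice ι 2) f : ℝ)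
      ≤ Fintype.card ι - Real.logb 2 (Fintype.card ι) / 4 := by
  classical
  set n := Fintype.card ι
  set m := Nat.log 4 n
  obtain ⟨H, hHm, b, hH⟩ : ∃ H : Finset ι, #H = m + 1 ∧ ∃ b, IsMonochromatic f 2 H b :=
    exists_isMonochromatic_two_of_four_pow_le f (Nat.pow_log_le_self 4 Fintype.card_ne_zero)
  have hD : 2 * Dquery (cubeSlice ι 2) f + (m + 1) ≤ 2 * n := by
    have := hH.computableWithin_two.dquery_le
    have : #Hᶜ + #H = n := card_compl_add_card H
    omega
  have hDℝ : (2 * Dquery (cubeSlice ι 2) f + (m + 1) : ℝ) ≤ 2 * n := by exact_mod_cast hD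
  have hmlog : Real.logb 2 n / 2 < m + 1 := by
    have hlog : Real.logb (4 : ℕ) n = Real.logb 2 n / 2 := by
      rw [Nat.cast_ofNat, show (4 : ℝ) = 2 ^ 2 by norm_num, Real.logb, Real.log_pow, Nat.cast_two,
        Real.logb, div_div, mul_comm]
    have hfloor : ⌊Real.logb 2 n / 2⌋₊ = m := hlog ▸ Real.natFloor_logb_natCast 4 n
    rw [← hfloor]
    exact Nat.lt_floor_add_one _
  linarith

end Asymptotics

/-- The maximum deterministic query complexity on the weight-2 slice is `n - Θ(log n)`:
for all sufficiently large `n`, some function requires `n - 2 log₂ n` queries, while every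
function can be computed with `n - (log₂ n)/4` queries. -/
theorem stmt4 : ∃ N : ℕ, ∀ n : ℕ, N ≤ n →
    (∃ f : (Fin n → Bool) → Bool,
      (n : ℝ) - 2 * Real.logb 2 n ≤ (Dquery (cubeSlice (Fin n) 2) f : ℝ)) ∧
    (∀ f : (Fin n → Bool) → Bool,
      (Dquery (cubeSlice (Fin n) 2) f : ℝ) ≤ (n : ℝ) - Real.logb 2 n / 4) := by
  refine ⟨3, fun n hn => ⟨?_, fun f => ?_⟩⟩
  · simpa using exists_card_sub_le_dquery_cubeSlice_two (ι := Fin n) (by simpa using hn)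
  · have : NeZero n := ⟨by omega⟩
    simpa using dquery_cubeSlice_two_le f
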